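/- arXiv:1210.0190 — 2 statements merged into one kernel-verified Lean document; each statement's English description precedes it below -/
import Mathlib

section
/- Suppose g, h₁, h₂, h₃ ∈ Gal(F'/ℚ) satisfy: g(w₁) = w₂, g(w₂) = w₃, g(w₃) = w₁ and g(i) = i; and for each i ∈ {1,2,3}, hᵢ(wᵢ) = −wᵢ, hᵢ(w_j) = w_j for j ≠ i, and hᵢ(i) = i. Then the fixed field of the subgroup of Gal(F'/ℚ) generated by g, h₁h₂ and h₂h₃ equals ℚ(i, w₁w₂w₃) = ℚ(√−1, √(1 + 3a − a³)), an extension of ℚ of degree 4 whose Galois group is isomorphic to ℤ/2ℤ × ℤ/2ℤ. -/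
/-!
Put `N = ℚ(i, w₁w₂w₃)`. The subgroup `H` generated by `g, h₁h₂, h₂h₃` fixes `N`. It contains the
element `g` of order `3` and the commuting involutions `h₁h₂ ≠ h₂h₃`, so `12 ∣ |H| = [F' : F'^H]`.
On the other hand `w₂² ∈ ℚ(w₁²)`, because the conjugates of `ρ` are rational functions of `ρ`, and
`w₃` is a quotient of `w₁w₂w₃` by `w₁w₂`. So `F'` arises from `N` by adjoining `w₁²` (of degree at
most `3`), `w₁` and `w₂` (of degree at most `2` each), whence `[F' : N] ≤ 12` and `F'^H = N`.
As `(w₁w₂w₃)² = -(1 + 3a - a³)`, the field `N` is biquadratic.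
-/

open IntermediateField Polynomial Module

section CommutingInvolutions

variable {G : Type*} [Group G] {x y : G}

lemma eq_one_or_eq_of_mem_zpowers (hx : orderOf x = 2) {z : G} (hz : z ∈ Subgroup.zpowers x) :
    z = 1 ∨ z = x := by
  obtain ⟨n, rfl⟩ := hz
  change x ^ n = 1 ∨ x ^ n = x
  rw [← zpow_mod_orderOf, hx]
  rcases Int.emod_two_eq n with h | h <;> simp [h]

lemma disjoint_zpowers_of_orderOf_eq_two (hx : orderOf x = 2) (hy : orderOf y = 2) (hxy : x ≠ y) :
    Disjoint (Subgroup.zpowers x) (Subgroup.zpowers y) := by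
  rw [Subgroup.disjoint_def]
  intro z hzx hzy
  rcases eq_one_or_eq_of_mem_zpowers hx hzx with rfl | rfl
  · rfl
  · exact (eq_one_or_eq_of_mem_zpowers hy hzy).resolve_right hxy

lemma orderOf_mul_orderOf_dvd_natCard (h : Commute x y)
    (hdisj : Disjoint (Subgroup.zpowers x) (Subgroup.zpowers y)) :
    orderOf x * orderOf y ∣ Nat.card G := by
  have hcomm : ∀ (m : Subgroup.zpowers x) (n : Subgroup.zpowers y),
      Commute ((Subgroup.zpowers x).subtype m) ((Subgroup.zpowers y).subtype n) := by
    rintro ⟨_, m, rfl⟩ ⟨_, n, rfl⟩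
    exact h.zpow_zpow m n
  have hinj := (MonoidHom.noncommCoprod_injective _ _ hcomm).2
    ⟨Subgroup.subtype_injective _, Subgroup.subtype_injective _, by simpa using hdisj⟩
  simpa only [Nat.card_prod, Nat.card_zpowers] using Subgroup.card_dvd_of_injective _ hinj

lemma four_dvd_natCard_of_orderOf_eq_two (h : Commute x y) (hx : orderOf x = 2)
    (hy : orderOf y = 2) (hxy : x ≠ y) : 4 ∣ Nat.card G := by
  simpa only [hx, hy] using
    orderOf_mul_orderOf_dvd_natCard h (disjoint_zpowers_of_orderOf_eq_two hx hy hxy)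

end CommutingInvolutions

variable {F K : Type*} [Field F] [Field K] [Algebra F K]

section Degree

lemma finrank_adjoin_simple_le_natDegree {x : K} {p : F[X]} (hp : p ≠ 0) (hx : aeval x p = 0) :
    finrank F F⟮x⟯ ≤ p.natDegree := by
  rw [adjoin.finrank (IsAlgebraic.isIntegral ⟨p, hp, hx⟩)]
  exact natDegree_le_of_dvd (minpoly.dvd F x hx) hp

lemma finrank_sup_adjoin_simple_le (M : IntermediateField F K) {x : K} {n : ℕ} (hn : n ≠ 0)
    (hx : x ^ n ∈ M) : finrank F ↥(M ⊔ F⟮x⟯) ≤ n * finrank F M := by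
  have hroot : aeval x (X ^ n - C (⟨x ^ n, hx⟩ : M)) = 0 := by
    simp [IntermediateField.algebraMap_apply]
  have hle := finrank_adjoin_simple_le_natDegree (X_pow_sub_C_ne_zero hn.bot_lt _) hroot
  rw [natDegree_X_pow_sub_C] at hle
  rw [← restrictScalars_adjoin_eq_sup]
  calc finrank F M⟮x⟯ = finrank F M * finrank M M⟮x⟯ := (finrank_mul_finrank F M M⟮x⟯).symm
    _ ≤ n * finrank F M := by rw [mul_comm]; gcongr

lemma finrank_adjoin_simple_eq_two_of_sq {x : K} {c : F} (hx : x ^ 2 = algebraMap F K c)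
    (hc : ¬IsSquare c) : finrank F F⟮x⟯ = 2 := by
  have hroot : aeval x (X ^ 2 - C c) = 0 := by simp [hx]
  have hmonic : (X ^ 2 - C c).Monic := monic_X_pow_sub_C c two_ne_zero
  have hirr : Irreducible (X ^ 2 - C c) :=
    X_pow_sub_C_irreducible_of_prime Nat.prime_two fun b hb ↦ hc (hb ▸ IsSquare.sq b)
  rw [adjoin.finrank ⟨_, hmonic, hroot⟩, ← minpoly.eq_of_irreducible_of_monic hirr hroot hmonic,
    natDegree_X_pow_sub_C]

end Degree

section Biquadratic

variable {x y : K} {c d : F}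

lemma exists_eq_add_mul_of_mem_adjoin_of_sq (hx : x ^ 2 = algebraMap F K c) (hy : y ∈ F⟮x⟯) :
    ∃ p q : F, y = algebraMap F K p + algebraMap F K q * x := by
  have hmonic : (X ^ 2 - C c).Monic := monic_X_pow_sub_C c two_ne_zero
  have hroot : aeval x (X ^ 2 - C c) = 0 := by simp [hx]
  have hint : IsIntegral F x := ⟨_, hmonic, hroot⟩
  rw [← mem_toSubalgebra, adjoin_simple_toSubalgebra_of_isAlgebraic hint.isAlgebraic,
    Algebra.adjoin_singleton_eq_range_aeval] at hy
  obtain ⟨f, rfl⟩ := hy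
  have hdeg : (f %ₘ (X ^ 2 - C c)).natDegree ≤ 1 := by
    have := natDegree_modByMonic_lt f hmonic (by
      intro h
      simpa using congrArg natDegree h)
    rw [natDegree_X_pow_sub_C] at this
    omega
  obtain ⟨q, p, hqp⟩ := exists_eq_X_add_C_of_natDegree_le_one hdeg
  refine ⟨p, q, ?_⟩
  change aeval x f = _
  rw [← aeval_modByMonic_eq_self_of_root hroot, hqp]
  simp [add_comm]

lemma isSquare_or_isSquare_mul_of_mem_adjoin_simple (h2 : (2 : F) ≠ 0)
    (hx : x ^ 2 = algebraMap F K c) (hy : y ^ 2 = algebraMap F K d) (hmem : y ∈ F⟮x⟯) :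
    IsSquare c ∨ IsSquare d ∨ IsSquare (c * d) := by
  obtain ⟨p, q, rfl⟩ := exists_eq_add_mul_of_mem_adjoin_of_sq hx hmem
  have hinj := (algebraMap F K).injective
  rcases eq_or_ne p 0 with rfl | hp
  · refine .inr (.inr ⟨q * c, hinj ?_⟩)
    simp only [map_mul, ← hy, ← hx, map_zero]
    ring
  rcases eq_or_ne q 0 with rfl | hq
  · refine .inr (.inl ⟨p, hinj ?_⟩)
    simp only [map_mul, ← hy, map_zero]
    ring
  have hpq : 2 * p * q ≠ 0 := mul_ne_zero (mul_ne_zero h2 hp) hq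
  have hxF : x = algebraMap F K ((d - p ^ 2 - q ^ 2 * c) / (2 * p * q)) := by
    have hpq' : algebraMap F K (2 * p * q) ≠ 0 := by simpa using hpq
    rw [map_div₀, eq_div_iff hpq']
    simp only [map_mul, map_sub, map_pow, map_ofNat, ← hx, ← hy]
    ring
  exact .inl ⟨_, hinj (by rw [← hx, map_mul, ← hxF, sq])⟩

lemma finrank_adjoin_pair_eq_four_of_sq (h2 : (2 : F) ≠ 0) (hx : x ^ 2 = algebraMap F K c)
    (hy : y ^ 2 = algebraMap F K d) (hc : ¬IsSquare c) (hd : ¬IsSquare d)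
    (hcd : ¬IsSquare (c * d)) : finrank F F⟮x, y⟯ = 4 := by
  have hy' : y ^ 2 = algebraMap F⟮x⟯ K (algebraMap F F⟮x⟯ d) := by
    rw [hy, ← IsScalarTower.algebraMap_apply]
  have hd' : ¬IsSquare (algebraMap F F⟮x⟯ d) := by
    rintro ⟨z, hz⟩
    have hz' : (z : K) ^ 2 = algebraMap F K d := by
      rw [sq]; exact (congrArg Subtype.val hz).symm
    rcases isSquare_or_isSquare_mul_of_mem_adjoin_simple h2 hx hz' z.2 with h | h | h
    exacts [hc h, hd h, hcd h]
  rw [← adjoin_simple_adjoin_simple]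
  calc finrank F F⟮x⟯⟮y⟯ = finrank F F⟮x⟯ * finrank F⟮x⟯ F⟮x⟯⟮y⟯ := (finrank_mul_finrank ..).symm
    _ = 2 * 2 := by
      rw [finrank_adjoin_simple_eq_two_of_sq hx hc, finrank_adjoin_simple_eq_two_of_sq hy' hd']

lemma isGalois_adjoin_simple_of_sq (h2 : (2 : F) ≠ 0) (hx : x ^ 2 = algebraMap F K c)
    (hc : ¬IsSquare c) : IsGalois F F⟮x⟯ := by
  have : Algebra.IsQuadraticExtension F F⟮x⟯ := ⟨finrank_adjoin_simple_eq_two_of_sq hx hc⟩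
  have hsep : IsSeparable F x := by
    refine (separable_X_pow_sub_C (n := 2) c (by exact_mod_cast h2) ?_).of_dvd
      (minpoly.dvd F x (by simp [hx]))
    rintro rfl
    exact hc (IsSquare.zero)
  have := (isSeparable_adjoin_simple_iff_isSeparable F K).2 hsep
  infer_instance

lemma isGalois_adjoin_pair_of_sq (h2 : (2 : F) ≠ 0) (hx : x ^ 2 = algebraMap F K c)
    (hy : y ^ 2 = algebraMap F K d) (hc : ¬IsSquare c) (hd : ¬IsSquare d) :
    IsGalois F F⟮x, y⟯ := by
  have := isGalois_adjoin_simple_of_sq h2 hx hc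
  have := isGalois_adjoin_simple_of_sq h2 hy hd
  rw [Set.insert_eq, adjoin_union]
  exact {}

lemma algEquiv_ext_of_eq_adjoin {M : IntermediateField F K} {S : Set K} (hM : M = adjoin F S)
    {σ τ : Gal(M/F)} (h : ∀ z : M, (z : K) ∈ S → σ z = τ z) : σ = τ :=
  AlgEquiv.coe_toAlgHom_injective (algHom_ext_of_eq_adjoin F hM fun _ hz ↦ h _ hz)

lemma sq_eq_one_of_gal_adjoin_pair (hx : x ^ 2 = algebraMap F K c)
    (hy : y ^ 2 = algebraMap F K d) (σ : Gal(F⟮x, y⟯/F)) : σ ^ 2 = 1 := by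
  have hinv : ∀ (z : F⟮x, y⟯) (e : F), (z : K) ^ 2 = algebraMap F K e → σ (σ z) = z := by
    intro z e hz
    have hz' : z ^ 2 = algebraMap F F⟮x, y⟯ e := Subtype.ext hz
    have hσ : σ z ^ 2 = z ^ 2 := by rw [← map_pow, hz', AlgEquiv.commutes]
    rcases sq_eq_sq_iff_eq_or_eq_neg.1 hσ with h | h <;> simp [h]
  refine algEquiv_ext_of_eq_adjoin rfl ?_
  rintro z (hz | hz)
  · exact hinv z c (by rwa [hz])
  · exact hinv z d (by rwa [Set.mem_singleton_iff.1 hz])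

lemma isKleinFour_gal_adjoin_pair_of_sq (h2 : (2 : F) ≠ 0) (hx : x ^ 2 = algebraMap F K c)
    (hy : y ^ 2 = algebraMap F K d) (hc : ¬IsSquare c) (hd : ¬IsSquare d)
    (hcd : ¬IsSquare (c * d)) : IsKleinFour Gal(F⟮x, y⟯/F) := by
  have hrank := finrank_adjoin_pair_eq_four_of_sq h2 hx hy hc hd hcd
  have := isGalois_adjoin_pair_of_sq h2 hx hy hc hd
  have : FiniteDimensional F F⟮x, y⟯ := .of_finrank_pos (by omega)
  have hcard : Nat.card Gal(F⟮x, y⟯/F) = 4 := hrank ▸ IsGalois.card_aut_eq_finrank F F⟮x, y⟯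
  have : Nontrivial Gal(F⟮x, y⟯/F) := Finite.one_lt_card_iff_nontrivial.1 (by omega)
  exact ⟨hcard, (Monoid.exponent_eq_prime_iff Nat.prime_two).2 fun σ hσ ↦
    orderOf_eq_prime (sq_eq_one_of_gal_adjoin_pair hx hy σ) hσ⟩

end Biquadratic

lemma adjoin_pair_eq_of_sq_eq_mul_sq {x y z : K} (hx : x ≠ 0) (h : y ^ 2 = (x * z) ^ 2) :
    F⟮x, y⟯ = F⟮x, z⟯ := by
  have hle {r s t : K} (hr : r ∈ F⟮x, t⟯) (hst : s ^ 2 = (r * t) ^ 2) : F⟮x, s⟯ ≤ F⟮x, t⟯ := by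
    have hrt : r * t ∈ F⟮x, t⟯ := mul_mem hr (mem_adjoin_pair_right F x t)
    rw [adjoin_le_iff, Set.insert_subset_iff, Set.singleton_subset_iff]
    refine ⟨mem_adjoin_pair_left F x t, ?_⟩
    rcases sq_eq_sq_iff_eq_or_eq_neg.1 hst with rfl | rfl
    exacts [hrt, neg_mem hrt]
  exact le_antisymm (hle (mem_adjoin_pair_left F x z) h)
    (hle (inv_mem (mem_adjoin_pair_left F x y)) (by rw [mul_pow, h]; field_simp))

section SignedRotation

lemma adjoin_eq_adjoin_mul_sup {x y z ι : K} (hx : x ≠ 0) (hy : y ≠ 0) :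
    adjoin F {x, y, z, ι} = F⟮ι, x * y * z⟯ ⊔ F⟮x ^ 2⟯ ⊔ F⟮x⟯ ⊔ F⟮y⟯ := by
  set M := F⟮ι, x * y * z⟯ ⊔ F⟮x ^ 2⟯ ⊔ F⟮x⟯ ⊔ F⟮y⟯
  have hxM : x ∈ M := (le_sup_right.trans le_sup_left : F⟮x⟯ ≤ M) (mem_adjoin_simple_self F x)
  have hyM : y ∈ M := (le_sup_right : F⟮y⟯ ≤ M) (mem_adjoin_simple_self F y)
  have hle : F⟮ι, x * y * z⟯ ≤ M := le_sup_left.trans (le_sup_left.trans le_sup_left)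
  have hzM : z ∈ M := by
    have hz : z = x * y * z / (x * y) := by field_simp
    rw [hz]
    exact div_mem (hle (mem_adjoin_pair_right F _ _)) (mul_mem hxM hyM)
  have hgen : ∀ t ∈ ({x, y, z, ι} : Set K), t ∈ adjoin F {x, y, z, ι} :=
    fun t ht ↦ subset_adjoin F _ ht
  apply le_antisymm
  · rw [adjoin_le_iff]
    rintro t (rfl | rfl | rfl | rfl)
    exacts [hxM, hyM, hzM, hle (mem_adjoin_pair_left F _ _)]
  · simp only [Set.mem_insert_iff, Set.mem_singleton_iff, forall_eq_or_imp, forall_eq] at hgen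
    obtain ⟨hx', hy', hz', hι'⟩ := hgen
    refine sup_le (sup_le (sup_le ?_ ?_) ?_) ?_ <;>
      simp only [adjoin_le_iff, Set.insert_subset_iff, Set.singleton_subset_iff, SetLike.mem_coe]
    exacts [⟨hι', mul_mem (mul_mem hx' hy') hz'⟩, pow_mem hx' 2, hx', hy']

lemma finrank_adjoin_le_four_mul {x y z ι : K} (hx : x ≠ 0) (hy : y ≠ 0)
    (hyx : y ^ 2 ∈ F⟮x ^ 2⟯) :
    finrank F (adjoin F {x, y, z, ι}) ≤ 4 * (finrank F F⟮ι, x * y * z⟯ * finrank F F⟮x ^ 2⟯) := by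
  rw [adjoin_eq_adjoin_mul_sup hx hy]
  set M₀ := F⟮ι, x * y * z⟯ ⊔ F⟮x ^ 2⟯
  have hM₀ : F⟮x ^ 2⟯ ≤ M₀ := le_sup_right
  calc finrank F (M₀ ⊔ F⟮x⟯ ⊔ F⟮y⟯ : IntermediateField F K)
      ≤ 2 * finrank F (M₀ ⊔ F⟮x⟯ : IntermediateField F K) :=
        finrank_sup_adjoin_simple_le _ two_ne_zero (le_sup_left (a := M₀) (hM₀ hyx))
    _ ≤ 2 * (2 * finrank F M₀) := by
        gcongr
        exact finrank_sup_adjoin_simple_le _ two_ne_zero (hM₀ (mem_adjoin_simple_self F _))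
    _ = 4 * finrank F M₀ := by ring
    _ ≤ 4 * (finrank F F⟮ι, x * y * z⟯ * finrank F F⟮x ^ 2⟯) := by
        gcongr
        exact finrank_sup_le _ _

variable {M : IntermediateField F K} {ι : M} {w : Fin 3 → M} {g : Gal(M/F)}
  {h : Fin 3 → Gal(M/F)}

lemma algEquiv_ext_of_forall_generator
    (hM : M = adjoin F {(w 0 : K), (w 1 : K), (w 2 : K), (ι : K)})
    {σ τ : Gal(M/F)} (hw : ∀ j, σ (w j) = τ (w j)) (hι : σ ι = τ ι) : σ = τ := by
  refine algEquiv_ext_of_eq_adjoin hM fun z hz ↦ ?_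
  simp only [Set.mem_insert_iff, Set.mem_singleton_iff, Subtype.coe_inj] at hz
  rcases hz with rfl | rfl | rfl | rfl
  exacts [hw 0, hw 1, hw 2, hι]

lemma orderOf_rotation (hM : M = adjoin F {(w 0 : K), (w 1 : K), (w 2 : K), (ι : K)})
    (hne : w 0 ≠ w 1) (hgι : g ι = ι) (hgw : ∀ j, g (w j) = w (j + 1)) : orderOf g = 3 := by
  refine orderOf_eq_prime (algEquiv_ext_of_forall_generator hM (fun j ↦ ?_) ?_) ?_
  · simp [pow_succ, hgw, add_assoc, Fin.reduceAdd]
  · simp [pow_succ, hgι]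
  · rintro rfl
    exact hne (hgw 0)

lemma orderOf_flip_mul_flip (hM : M = adjoin F {(w 0 : K), (w 1 : K), (w 2 : K), (ι : K)})
    (hneg : ∀ j, -w j ≠ w j)
    (hhι : ∀ i, h i ι = ι) (hhw : ∀ i j, h i (w j) = if i = j then -w j else w j)
    {i j : Fin 3} (hij : i ≠ j) : orderOf (h i * h j) = 2 := by
  refine orderOf_eq_prime (algEquiv_ext_of_forall_generator hM (fun l ↦ ?_) ?_) fun h1 ↦ hneg j ?_
  · by_cases hi : i = l <;> by_cases hj : j = l <;> simp [pow_two, hhw, hi, hj]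
  · simp [pow_two, hhι]
  · simpa [hhw, hij] using DFunLike.congr_fun h1 (w j)

lemma commute_flips (hM : M = adjoin F {(w 0 : K), (w 1 : K), (w 2 : K), (ι : K)})
    (hhι : ∀ i, h i ι = ι) (hhw : ∀ i j, h i (w j) = if i = j then -w j else w j)
    (i j : Fin 3) : Commute (h i) (h j) := by
  refine algEquiv_ext_of_forall_generator hM (fun l ↦ ?_) ?_
  · by_cases hi : i = l <;> by_cases hj : j = l <;> simp [hhw, hi, hj]
  · simp [hhι]

lemma twelve_dvd_natCard_closure (hM : M = adjoin F {(w 0 : K), (w 1 : K), (w 2 : K), (ι : K)})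
    (hneg : ∀ j, -w j ≠ w j) (hgι : g ι = ι) (hgw : ∀ j, g (w j) = w (j + 1))
    (hhι : ∀ i, h i ι = ι) (hhw : ∀ i j, h i (w j) = if i = j then -w j else w j) :
    12 ∣ Nat.card (Subgroup.closure {g, h 0 * h 1, h 1 * h 2}) := by
  set H := Subgroup.closure {g, h 0 * h 1, h 1 * h 2}
  have hgH : g ∈ H := Subgroup.subset_closure (by simp)
  have h₀₁H : h 0 * h 1 ∈ H := Subgroup.subset_closure (by simp)
  have h₁₂H : h 1 * h 2 ∈ H := Subgroup.subset_closure (by simp)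
  have hw₀₁ : w 0 ≠ w 1 := fun h01 ↦
    hneg 0 ((by simpa [hhw] using congrArg (h 0) h01 : -w 0 = w 1).trans h01.symm)
  have hdvd₃ : 3 ∣ Nat.card H := by
    rw [← orderOf_rotation hM hw₀₁ hgι hgw, ← Subgroup.orderOf_mk g hgH]
    exact orderOf_dvd_natCard _
  have hne : h 0 * h 1 ≠ h 1 * h 2 := fun h01 ↦ hneg 0 <| by
    simpa [hhw] using DFunLike.congr_fun h01 (w 0)
  have hcomm : Commute (h 0 * h 1) (h 1 * h 2) :=
    have hc := commute_flips hM hhι hhw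
    ((hc 0 1).mul_right (hc 0 2)).mul_left ((hc 1 1).mul_right (hc 1 2))
  have hdvd₄ : 4 ∣ Nat.card H := by
    refine four_dvd_natCard_of_orderOf_eq_two (x := ⟨_, h₀₁H⟩) (y := ⟨_, h₁₂H⟩)
      (Subtype.ext hcomm) ?_ ?_ (fun h01 ↦ hne (congrArg Subtype.val h01)) <;>
    rw [Subgroup.orderOf_mk]
    exacts [orderOf_flip_mul_flip hM hneg hhι hhw (by decide),
      orderOf_flip_mul_flip hM hneg hhι hhw (by decide)]
  exact Nat.Coprime.mul_dvd_of_dvd_of_dvd (by decide) hdvd₃ hdvd₄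

lemma mem_fixedField_closure_iff {S : Set Gal(K/F)} {x : K} :
    x ∈ fixedField (Subgroup.closure S) ↔ ∀ σ ∈ S, σ x = x := by
  rw [mem_fixedField_iff]
  exact Subgroup.closure_le (MulAction.stabilizer Gal(K/F) x)

lemma adjoin_le_lift_fixedField_closure (hgι : g ι = ι) (hgw : ∀ j, g (w j) = w (j + 1))
    (hhι : ∀ i, h i ι = ι) (hhw : ∀ i j, h i (w j) = if i = j then -w j else w j) :
    F⟮(ι : K), (w 0 * w 1 * w 2 : K)⟯ ≤
      lift (fixedField (Subgroup.closure {g, h 0 * h 1, h 1 * h 2})) := by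
  rw [adjoin_le_iff, Set.insert_subset_iff, Set.singleton_subset_iff]
  refine ⟨(mem_lift ι).2 ?_, (mem_lift (w 0 * w 1 * w 2)).2 ?_⟩ <;>
    simp only [mem_fixedField_closure_iff, Set.mem_insert_iff, Set.mem_singleton_iff,
      forall_eq_or_imp, forall_eq, AlgEquiv.mul_apply, map_mul]
  · simp [hgι, hhι]
  · simp [hgw, hhw, mul_comm, mul_assoc]

theorem lift_fixedField_closure_eq_adjoin [FiniteDimensional F M]
    (hM : M = adjoin F {(w 0 : K), (w 1 : K), (w 2 : K), (ι : K)})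
    (hneg : ∀ j, -w j ≠ w j) (hdeg : finrank F F⟮(w 0 : K) ^ 2⟯ ≤ 3)
    (hw₁₀ : (w 1 : K) ^ 2 ∈ F⟮(w 0 : K) ^ 2⟯) (hgι : g ι = ι) (hgw : ∀ j, g (w j) = w (j + 1))
    (hhι : ∀ i, h i ι = ι) (hhw : ∀ i j, h i (w j) = if i = j then -w j else w j) :
    lift (fixedField (Subgroup.closure {g, h 0 * h 1, h 1 * h 2})) =
      F⟮(ι : K), (w 0 * w 1 * w 2 : K)⟯ := by
  set H := Subgroup.closure {g, h 0 * h 1, h 1 * h 2}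
  set N := F⟮(ι : K), (w 0 * w 1 * w 2 : K)⟯
  have hw : ∀ j, (w j : K) ≠ 0 := fun j hj ↦ hneg j (by simp [Subtype.ext_iff, hj])
  have hcard : 12 ≤ Nat.card H :=
    Nat.le_of_dvd Nat.card_pos (twelve_dvd_natCard_closure hM hneg hgι hgw hhι hhw)
  have hupper : finrank F M ≤ 12 * finrank F N := by
    calc finrank F M
        = finrank F (adjoin F {(w 0 : K), (w 1 : K), (w 2 : K), (ι : K)}) := by rw [← hM]
      _ ≤ 4 * (finrank F N * finrank F F⟮(w 0 : K) ^ 2⟯) :=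
          finrank_adjoin_le_four_mul (hw 0) (hw 1) hw₁₀
      _ ≤ 4 * (finrank F N * 3) := by gcongr
      _ = 12 * finrank F N := by ring
  have htower : finrank F (fixedField H) * Nat.card H = finrank F M := by
    rw [← finrank_fixedField_eq_card, finrank_mul_finrank]
  have : FiniteDimensional F (lift (fixedField H)) := .equiv (liftAlgEquiv _).toLinearEquiv
  refine (eq_of_le_of_finrank_le (adjoin_le_lift_fixedField_closure hgι hgw hhι hhw) ?_).symm
  rw [← (liftAlgEquiv (fixedField H)).toLinearEquiv.finrank_eq]
  refine le_of_mul_le_mul_left ?_ (by norm_num : 0 < 12)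
  calc 12 * finrank F (fixedField H) ≤ Nat.card H * finrank F (fixedField H) := by gcongr
    _ = finrank F M := by rw [mul_comm, htower]
    _ ≤ 12 * finrank F N := hupper

end SignedRotation

lemma two_ne_zero_of_not_isSquare_neg_one (h : ¬IsSquare (-1 : F)) : (2 : F) ≠ 0 :=
  fun h2 ↦ h ⟨1, by linear_combination -h2⟩

lemma neg_ne_self_of_two_ne_zero {x : K} (h2 : (2 : F) ≠ 0) (hx : x ≠ 0) : -x ≠ x := by
  have h2K : (2 : K) ≠ 0 := map_ofNat (algebraMap F K) 2 ▸ (_root_.map_ne_zero _).2 h2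
  exact fun h ↦ mul_ne_zero h2K hx (by linear_combination -h)

lemma adjoin_simple_algebraMap_add (a : F) (x : K) : F⟮algebraMap F K a + x⟯ = F⟮x⟯ := by
  refine le_antisymm ?_ ?_ <;> rw [adjoin_simple_le_iff]
  · exact add_mem (IntermediateField.algebraMap_mem _ a) (mem_adjoin_simple_self F x)
  · simpa using sub_mem (mem_adjoin_simple_self F (algebraMap F K a + x))
      (IntermediateField.algebraMap_mem _ a)

lemma finiteDimensional_adjoin_of_sq_mem (E : IntermediateField F K) [FiniteDimensional F E]
    {S : Set K} [Finite S] (hS : ∀ x ∈ S, x ^ 2 ∈ E) : FiniteDimensional F (adjoin F S) :=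
  finiteDimensional_adjoin fun x hx ↦
    .of_pow two_pos <| (IsIntegral.of_finite F (⟨x ^ 2, hS x hx⟩ : E)).map E.val

section Cubic

variable {ρ : K} {a : F}

lemma finrank_adjoin_le_three_of_cubic (hρ : ρ ^ 3 - 3 * ρ + 1 = 0) : finrank F F⟮ρ⟯ ≤ 3 := by
  have hdeg : (X ^ 3 - 3 * X + 1 : F[X]).natDegree = 3 := by compute_degree!
  rw [← hdeg]
  exact finrank_adjoin_simple_le_natDegree (ne_zero_of_natDegree_gt (n := 2) (by omega))
    (by simpa [map_ofNat] using hρ)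

lemma isIntegral_of_cubic (hρ : ρ ^ 3 - 3 * ρ + 1 = 0) : IsIntegral F ρ :=
  ⟨X ^ 3 - 3 * X + 1, by monicity!, by simpa [map_ofNat] using hρ⟩

lemma ne_zero_of_cubic (hρ : ρ ^ 3 - 3 * ρ + 1 = 0) : ρ ≠ 0 := by
  rintro rfl
  simp at hρ

lemma one_sub_ne_zero_of_cubic (hρ : ρ ^ 3 - 3 * ρ + 1 = 0) : 1 - ρ ≠ 0 := by
  intro h
  obtain rfl : ρ = 1 := (sub_eq_zero.1 h).symm
  norm_num at hρ

lemma prod_add_conjugates_of_cubic (hρ : ρ ^ 3 - 3 * ρ + 1 = 0) (a : K) :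
    (a + ρ) * (a + 1 / (1 - ρ)) * (a + (1 - 1 / ρ)) = -(1 + 3 * a - a ^ 3) := by
  have hρ₀ := ne_zero_of_cubic hρ
  have hρ₁ := one_sub_ne_zero_of_cubic hρ
  field_simp
  linear_combination -(a ^ 2 + a) * hρ

lemma sq_prod_eq_of_cubic {x y z : K} (hρ : ρ ^ 3 - 3 * ρ + 1 = 0)
    (hx : x ^ 2 = algebraMap F K a + ρ) (hy : y ^ 2 = algebraMap F K a + 1 / (1 - ρ))
    (hz : z ^ 2 = algebraMap F K a + (1 - 1 / ρ)) :
    (x * y * z) ^ 2 = algebraMap F K (-(1 + 3 * a - a ^ 3)) := by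
  rw [mul_pow, mul_pow, hx, hy, hz, prod_add_conjugates_of_cubic hρ]
  simp only [map_neg, map_sub, map_add, map_mul, map_pow, map_one, map_ofNat]

lemma algebraMap_add_conjugates_mem_adjoin (ρ : K) (a : F) :
    algebraMap F K a + ρ ∈ F⟮ρ⟯ ∧ algebraMap F K a + 1 / (1 - ρ) ∈ F⟮ρ⟯ ∧
      algebraMap F K a + (1 - 1 / ρ) ∈ F⟮ρ⟯ := by
  have hρ := mem_adjoin_simple_self F ρ
  have ha : algebraMap F K a ∈ F⟮ρ⟯ := IntermediateField.algebraMap_mem _ a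
  exact ⟨add_mem ha hρ, add_mem ha (div_mem (one_mem _) (sub_mem (one_mem _) hρ)),
    add_mem ha (sub_mem (one_mem _) (div_mem (one_mem _) hρ))⟩

lemma finiteDimensional_adjoin_of_sq_eq_conjugates {w₁ w₂ w₃ i : K} {c : F}
    (hρ : ρ ^ 3 - 3 * ρ + 1 = 0)
    (hw₁ : w₁ ^ 2 = algebraMap F K a + ρ) (hw₂ : w₂ ^ 2 = algebraMap F K a + 1 / (1 - ρ))
    (hw₃ : w₃ ^ 2 = algebraMap F K a + (1 - 1 / ρ)) (hi : i ^ 2 = algebraMap F K c) :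
    FiniteDimensional F (adjoin F {w₁, w₂, w₃, i}) := by
  have : FiniteDimensional F F⟮ρ⟯ := adjoin.finiteDimensional (isIntegral_of_cubic hρ)
  obtain ⟨hmem₁, hmem₂, hmem₃⟩ := algebraMap_add_conjugates_mem_adjoin ρ a
  refine finiteDimensional_adjoin_of_sq_mem F⟮ρ⟯ ?_
  rintro x (rfl | rfl | rfl | rfl)
  exacts [hw₁ ▸ hmem₁, hw₂ ▸ hmem₂, hw₃ ▸ hmem₃, hi ▸ IntermediateField.algebraMap_mem _ c]

theorem lift_fixedField_closure_eq_adjoin_of_cubic {M : IntermediateField F K} {ι : M}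
    {w : Fin 3 → M} {g : Gal(M/F)} {h : Fin 3 → Gal(M/F)} {c : F}
    (hM : M = adjoin F {(w 0 : K), (w 1 : K), (w 2 : K), (ι : K)}) (h2 : (2 : F) ≠ 0)
    (hρ : ρ ^ 3 - 3 * ρ + 1 = 0) (ha : 1 + 3 * a - a ^ 3 ≠ 0)
    (hw₀ : (w 0 : K) ^ 2 = algebraMap F K a + ρ)
    (hw₁ : (w 1 : K) ^ 2 = algebraMap F K a + 1 / (1 - ρ))
    (hw₂ : (w 2 : K) ^ 2 = algebraMap F K a + (1 - 1 / ρ)) (hι : (ι : K) ^ 2 = algebraMap F K c)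
    (hgι : g ι = ι) (hgw : ∀ j, g (w j) = w (j + 1))
    (hhι : ∀ i, h i ι = ι) (hhw : ∀ i j, h i (w j) = if i = j then -w j else w j) :
    lift (fixedField (Subgroup.closure {g, h 0 * h 1, h 1 * h 2})) =
      F⟮(ι : K), (w 0 * w 1 * w 2 : K)⟯ := by
  have : FiniteDimensional F M :=
    hM ▸ finiteDimensional_adjoin_of_sq_eq_conjugates hρ hw₀ hw₁ hw₂ hι
  have hprod : (w 0 * w 1 * w 2 : K) ≠ 0 := by
    have hsq := sq_prod_eq_of_cubic hρ hw₀ hw₁ hw₂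
    rw [← pow_ne_zero_iff two_ne_zero, hsq, map_ne_zero_iff _ (algebraMap F K).injective]
    exact neg_ne_zero.2 ha
  have hneg : ∀ j, -w j ≠ w j := by
    simp only [ne_eq, mul_eq_zero, not_or, ZeroMemClass.coe_eq_zero] at hprod
    obtain ⟨⟨h₀, h₁⟩, h₂⟩ := hprod
    simp [Fin.forall_fin_succ, neg_ne_self_of_two_ne_zero h2, h₀, h₁, h₂]
  have hadjoin : F⟮(w 0 : K) ^ 2⟯ = F⟮ρ⟯ := by rw [hw₀, adjoin_simple_algebraMap_add]
  exact lift_fixedField_closure_eq_adjoin hM hneg (hadjoin ▸ finrank_adjoin_le_three_of_cubic hρ)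
    (hadjoin ▸ hw₁ ▸ (algebraMap_add_conjugates_mem_adjoin ρ a).2.1) hgι hgw hhι hhw

end Cubic

lemma one_add_three_mul_sub_cube_pos_of_cubic {ρ a : ℝ} (hρ : ρ ^ 3 - 3 * ρ + 1 = 0) (ha₀ : 0 < a)
    (ha : a < -ρ) : 0 < 1 + 3 * a - a ^ 3 := by
  have hfactor : -ρ * (1 + 3 * a - a ^ 3) = (-ρ - a) * (1 + a * -ρ * (-ρ + a)) := by
    linear_combination a * hρ
  have hρ₀ : 0 < -ρ := ha₀.trans ha
  refine pos_of_mul_pos_right (a := -ρ) ?_ hρ₀.le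
  rw [hfactor]
  exact mul_pos (sub_pos.2 ha) (by positivity)

theorem stmt17_general {k L : Type*} [Field k] [Field L] [Algebra k L]
    (hneg_one : ¬IsSquare (-1 : k))
    (ρ ρ₂ ρ₃ : L) (hρroot : ρ ^ 3 - 3 * ρ + 1 = 0)
    (hρ₂ : ρ₂ = 1 / (1 - ρ)) (hρ₃ : ρ₃ = 1 - 1 / ρ)
    (a : k) (hans : ¬IsSquare (1 + 3 * a - a ^ 3)) (hans' : ¬IsSquare (-(1 + 3 * a - a ^ 3)))
    (i s : L) (hi : i ^ 2 = -1) (hs : s ^ 2 = algebraMap k L (1 + 3 * a - a ^ 3))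
    (w₁ w₂ w₃ : L) (hw₁ : w₁ ^ 2 = algebraMap k L a + ρ) (hw₂ : w₂ ^ 2 = algebraMap k L a + ρ₂)
    (hw₃ : w₃ ^ 2 = algebraMap k L a + ρ₃)
    (F' : IntermediateField k L) (hF' : F' = adjoin k {w₁, w₂, w₃, i})
    (hm₁ : w₁ ∈ F') (hm₂ : w₂ ∈ F') (hm₃ : w₃ ∈ F') (hmi : i ∈ F')
    (g h₁ h₂ h₃ : Gal(F'/k))
    (hg₁ : (g ⟨w₁, hm₁⟩ : L) = w₂) (hg₂ : (g ⟨w₂, hm₂⟩ : L) = w₃)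
    (hg₃ : (g ⟨w₃, hm₃⟩ : L) = w₁) (hgi : (g ⟨i, hmi⟩ : L) = i)
    (hh₁₁ : (h₁ ⟨w₁, hm₁⟩ : L) = -w₁) (hh₁₂ : (h₁ ⟨w₂, hm₂⟩ : L) = w₂)
    (hh₁₃ : (h₁ ⟨w₃, hm₃⟩ : L) = w₃) (hh₁i : (h₁ ⟨i, hmi⟩ : L) = i)
    (hh₂₁ : (h₂ ⟨w₁, hm₁⟩ : L) = w₁) (hh₂₂ : (h₂ ⟨w₂, hm₂⟩ : L) = -w₂)
    (hh₂₃ : (h₂ ⟨w₃, hm₃⟩ : L) = w₃) (hh₂i : (h₂ ⟨i, hmi⟩ : L) = i)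
    (hh₃₁ : (h₃ ⟨w₁, hm₁⟩ : L) = w₁) (hh₃₂ : (h₃ ⟨w₂, hm₂⟩ : L) = w₂)
    (hh₃₃ : (h₃ ⟨w₃, hm₃⟩ : L) = -w₃) (hh₃i : (h₃ ⟨i, hmi⟩ : L) = i) :
    (fixedField (Subgroup.closure {g, h₁ * h₂, h₂ * h₃})).map F'.val = k⟮i, w₁ * w₂ * w₃⟯ ∧
    k⟮i, w₁ * w₂ * w₃⟯ = k⟮i, s⟯ ∧
    finrank k k⟮i, w₁ * w₂ * w₃⟯ = 4 ∧
    Nonempty (Gal(k⟮i, w₁ * w₂ * w₃⟯/k) ≃* Multiplicative (ZMod 2) × Multiplicative (ZMod 2)) := by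
  subst hρ₂ hρ₃
  have h2 := two_ne_zero_of_not_isSquare_neg_one hneg_one
  have hi' : i ^ 2 = algebraMap k L (-1) := by simp [hi]
  have hu := sq_prod_eq_of_cubic hρroot hw₁ hw₂ hw₃
  have hcd : ¬IsSquare (-1 * -(1 + 3 * a - a ^ 3)) := by rwa [neg_mul_neg, one_mul]
  refine ⟨?_, ?_, finrank_adjoin_pair_eq_four_of_sq h2 hi' hu hneg_one hans' hcd, ?_⟩
  · refine lift_fixedField_closure_eq_adjoin_of_cubic
      (w := ![⟨w₁, hm₁⟩, ⟨w₂, hm₂⟩, ⟨w₃, hm₃⟩]) (ι := ⟨i, hmi⟩) (g := g) (h := ![h₁, h₂, h₃]) hF' h2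
      hρroot (fun h0 ↦ hans (h0 ▸ IsSquare.zero)) hw₁ hw₂ hw₃ hi' (Subtype.ext hgi)
      (fun j ↦ Subtype.ext ?_) (fun j ↦ Subtype.ext ?_) fun j l ↦ Subtype.ext ?_
    · fin_cases j
      exacts [hg₁, hg₂, hg₃]
    · fin_cases j
      exacts [hh₁i, hh₂i, hh₃i]
    · fin_cases j <;> fin_cases l
      exacts [hh₁₁, hh₁₂, hh₁₃, hh₂₁, hh₂₂, hh₂₃, hh₃₁, hh₃₂, hh₃₃]
  · refine adjoin_pair_eq_of_sq_eq_mul_sq (by rintro rfl; simp at hi) ?_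
    rw [hu, mul_pow, hi', hs, ← map_mul, neg_one_mul]
  · have := isKleinFour_gal_adjoin_pair_of_sq h2 hi' hu hneg_one hans' hcd
    have : IsKleinFour (Multiplicative (ZMod 2) × Multiplicative (ZMod 2)) :=
      ⟨by simp, by simp [Monoid.exponent_prod]⟩
    exact IsKleinFour.nonempty_mulEquiv

/-- For `g, h₁, h₂, h₃ ∈ Gal(F'/ℚ)` acting on `w₁, w₂, w₃, i` as
specified, the fixed field of the subgroup generated by `g, h₁h₂, h₂h₃` equals
`ℚ(i, w₁w₂w₃) = ℚ(√−1, √(1+3a−a³))`, an extension of `ℚ` of degree `4` with Galois group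
`ℤ/2ℤ × ℤ/2ℤ`. -/
theorem stmt17 (ρ ρ₂ ρ₃ : ℝ) (hρroot : ρ ^ 3 - 3 * ρ + 1 = 0) (hρneg : ρ < 0)
    (hρ₂ : ρ₂ = 1 / (1 - ρ)) (hρ₃ : ρ₃ = 1 - 1 / ρ)
    (a : ℚ) (ha₀ : 0 < a) (ha₁ : (a : ℝ) < -ρ)
    (hans : ¬∃ q : ℚ, q ^ 2 = 1 + 3 * a - a ^ 3)
    (w₁ w₂ w₃ : ℂ) (hw₁ : w₁ ^ 2 = ((a : ℝ) + ρ : ℝ)) (hw₂ : w₂ ^ 2 = ((a : ℝ) + ρ₂ : ℝ))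
    (hw₃ : w₃ ^ 2 = ((a : ℝ) + ρ₃ : ℝ))
    (F' : IntermediateField ℚ ℂ)
    (hF' : F' = IntermediateField.adjoin ℚ {w₁, w₂, w₃, Complex.I})
    (hm₁ : w₁ ∈ F') (hm₂ : w₂ ∈ F') (hm₃ : w₃ ∈ F') (hmi : Complex.I ∈ F')
    (g h₁ h₂ h₃ : F' ≃ₐ[ℚ] F')
    (hg₁ : (g ⟨w₁, hm₁⟩ : ℂ) = w₂) (hg₂ : (g ⟨w₂, hm₂⟩ : ℂ) = w₃)
    (hg₃ : (g ⟨w₃, hm₃⟩ : ℂ) = w₁) (hgi : (g ⟨Complex.I, hmi⟩ : ℂ) = Complex.I)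
    (hh₁₁ : (h₁ ⟨w₁, hm₁⟩ : ℂ) = -w₁) (hh₁₂ : (h₁ ⟨w₂, hm₂⟩ : ℂ) = w₂)
    (hh₁₃ : (h₁ ⟨w₃, hm₃⟩ : ℂ) = w₃) (hh₁i : (h₁ ⟨Complex.I, hmi⟩ : ℂ) = Complex.I)
    (hh₂₁ : (h₂ ⟨w₁, hm₁⟩ : ℂ) = w₁) (hh₂₂ : (h₂ ⟨w₂, hm₂⟩ : ℂ) = -w₂)
    (hh₂₃ : (h₂ ⟨w₃, hm₃⟩ : ℂ) = w₃) (hh₂i : (h₂ ⟨Complex.I, hmi⟩ : ℂ) = Complex.I)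
    (hh₃₁ : (h₃ ⟨w₁, hm₁⟩ : ℂ) = w₁) (hh₃₂ : (h₃ ⟨w₂, hm₂⟩ : ℂ) = w₂)
    (hh₃₃ : (h₃ ⟨w₃, hm₃⟩ : ℂ) = -w₃) (hh₃i : (h₃ ⟨Complex.I, hmi⟩ : ℂ) = Complex.I) :
    (IntermediateField.fixedField (Subgroup.closure {g, h₁ * h₂, h₂ * h₃})).map F'.val
        = IntermediateField.adjoin ℚ {Complex.I, w₁ * w₂ * w₃} ∧
    IntermediateField.adjoin ℚ {Complex.I, w₁ * w₂ * w₃}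
        = IntermediateField.adjoin ℚ
            {Complex.I, ((Real.sqrt (1 + 3 * (a : ℝ) - (a : ℝ) ^ 3) : ℝ) : ℂ)} ∧
    Module.finrank ℚ (IntermediateField.adjoin ℚ {Complex.I, w₁ * w₂ * w₃}) = 4 ∧
    Nonempty
      ((IntermediateField.adjoin ℚ {Complex.I, w₁ * w₂ * w₃} ≃ₐ[ℚ]
          IntermediateField.adjoin ℚ {Complex.I, w₁ * w₂ * w₃}) ≃*
        (Multiplicative (ZMod 2) × Multiplicative (ZMod 2))) := by
  have hD : 0 < 1 + 3 * (a : ℝ) - (a : ℝ) ^ 3 :=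
    one_add_three_mul_sub_cube_pos_of_cubic hρroot (by exact_mod_cast ha₀) ha₁
  have hDℚ : 0 < 1 + 3 * a - a ^ 3 := by exact_mod_cast hD
  refine stmt17_general (fun h ↦ h.nonneg.not_gt neg_one_lt_zero) (ρ : ℂ) ρ₂ ρ₃
    (by exact_mod_cast hρroot) (by simp [hρ₂]) (by simp [hρ₃]) a
    (fun ⟨q, hq⟩ ↦ hans ⟨q, by rw [hq, sq]⟩) (fun h ↦ h.nonneg.not_gt (neg_lt_zero.2 hDℚ))
    Complex.I _ Complex.I_sq ?_ w₁ w₂ w₃ (by simp [hw₁]) (by simp [hw₂]) (by simp [hw₃]) F' hF'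
    hm₁ hm₂ hm₃ hmi g h₁ h₂ h₃ hg₁ hg₂ hg₃ hgi hh₁₁ hh₁₂ hh₁₃ hh₁i hh₂₁ hh₂₂ hh₂₃ hh₂i
    hh₃₁ hh₃₂ hh₃₃ hh₃i
  rw [← Complex.ofReal_pow, Real.sq_sqrt hD.le]
  simp
end

section
/- Suppose g, h₁, h₂, h₃ ∈ Gal(F/ℚ) satisfy: g(z₁) = z₂, g(z₂) = z₃, g(z₃) = z₁; and for each i, hᵢ(zᵢ) = −zᵢ while hᵢ(z_j) = z_j for j ≠ i; assume every element of Gal(F/ℚ) is written uniquely as g^k h₁^{a₁} h₂^{a₂} h₃^{a₃} with k ∈ {0,1,2} and aᵢ ∈ {0,1}. Set c₁ = −1/(4ρ²), c₂ = −1/(4ρ₂²), c₃ = −1/(4ρ₃²) ∈ F^×, and define λ : Gal(F/ℚ) × Gal(F/ℚ) → F^× by λ(h₁^{a₁}h₂^{a₂}h₃^{a₃}, h₁^{b₁}h₂^{b₂}h₃^{b₃}) = (c₂c₃)^{a₁b₁}(c₁c₃)^{a₂b₂}(c₁c₂)^{a₃b₃} on the subgroup generated by h₁,h₂,h₃, and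 in general λ(g^k h, g^l h') = g^{k+l}(λ(g^{−l} h g^{l}, h')) for h, h' in that subgroup. Then λ is the coboundary of the 1-cochain c : Gal(F/ℚ) → F^× defined by c(g^k h₁^{a₁} h₂^{a₂} h₃^{a₃}) = g^k( (1/(4ρ₂ρ₃))^{a₁} (1/(4ρρ₃))^{a₂} (1/(4ρρ₂))^{a₃} ); in particular λ is a 2-cocycle representing the trivial class in H²(Gal(F/ℚ), F^×) for the natural Galois action of Gal(F/ℚ) on F^×. -/
/-!
On the subgroup `N` generated by the commuting involutions `h₁, h₂, h₃`, the cochain `c` takes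
values `u₁ ^ a₁ * u₂ ^ a₂ * u₃ ^ a₃` that `N` fixes, and `uᵢ² = cⱼ * cₖ`.  So there the coboundary
of `c` only measures the carry in adding exponents modulo `2`: it is the product of the
`(uᵢ²) ^ (aᵢ * bᵢ)`, which is `λ`.  Conjugation by `g` permutes the `hᵢ` in the same cyclic way as
`g` permutes the `uᵢ`, so `c` is equivariant, and the twisting rule for `λ` is precisely what
extends the identity from `N` to all products `g ^ k * h`.
-/

section PowProd

variable {M M' : Type*} [Monoid M] [Monoid M']

/-- The ordered monomial `x₀ ^ e₀ * x₁ ^ e₁ * x₂ ^ e₂` in a possibly noncommutative monoid.  It is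
used both for the normal form of a group element and for the value of a cochain at it; exponents
modulo `2` enter as `Fin.val ∘ a` with `a : Fin 3 → Fin 2`. -/
def powProd (x : Fin 3 → M) (e : Fin 3 → ℕ) : M :=
  x 0 ^ e 0 * x 1 ^ e 1 * x 2 ^ e 2

theorem map_powProd (f : M →* M') (x : Fin 3 → M) (e : Fin 3 → ℕ) :
    f (powProd x e) = powProd (fun i => f (x i)) e := by
  simp only [powProd, map_mul, map_pow]

theorem powProd_pow_left (x : Fin 3 → M) (n : ℕ) (e : Fin 3 → ℕ) :
    powProd (fun i => x i ^ n) e = powProd x (fun i => n * e i) := by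
  simp only [powProd, pow_mul]

theorem powProd_one_left (e : Fin 3 → ℕ) : powProd (fun _ => (1 : M)) e = 1 := by
  simp only [powProd, one_pow, mul_one]

theorem powProd_ne_zero {M₀ : Type*} [MonoidWithZero M₀] [NoZeroDivisors M₀]
    {x : Fin 3 → M₀} (hx : ∀ i, x i ≠ 0) (e : Fin 3 → ℕ) : powProd x e ≠ 0 :=
  mul_ne_zero (mul_ne_zero (pow_ne_zero _ (hx 0)) (pow_ne_zero _ (hx 1))) (pow_ne_zero _ (hx 2))

variable {x : Fin 3 → M}

theorem powProd_add (hx : ∀ i j, Commute (x i) (x j)) (d e : Fin 3 → ℕ) :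
    powProd x (d + e) = powProd x d * powProd x e := by
  have hpow (i j : Fin 3) (m n : ℕ) : Commute (x i ^ m) (x j ^ n) := (hx i j).pow_pow m n
  simp only [powProd, Pi.add_apply, pow_add]
  rw [((hpow 2 0 _ _).mul_right (hpow 2 1 _ _)).mul_mul_mul_comm, (hpow 1 0 _ _).mul_mul_mul_comm]

theorem powProd_mul_powProd (hx : ∀ i j, Commute (x i) (x j)) (a b : Fin 3 → Fin 2) :
    powProd x (Fin.val ∘ a) * powProd x (Fin.val ∘ b) =
      powProd (fun i => x i ^ 2) (fun i => (a i : ℕ) * b i) * powProd x (Fin.val ∘ (a + b)) := by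
  have carry : ∀ s t : Fin 2, (s : ℕ) + t = 2 * (s * t) + (s + t : Fin 2) := by decide
  rw [powProd_pow_left, ← powProd_add hx, ← powProd_add hx]
  exact congrArg (powProd x) (funext fun i => carry (a i) (b i))

theorem map_powProd_rotate (hx : ∀ i j, Commute (x i) (x j)) {f : M →* M}
    (hf : ∀ i, f (x i) = x (i + 1)) (e : Fin 3 → ℕ) :
    f (powProd x fun i => e (i + 1)) = powProd x e := by
  have hcomm : Commute (x 0 ^ e 0) (x 1 ^ e 1 * x 2 ^ e 2) :=
    ((hx 0 1).pow_pow _ _).mul_right ((hx 0 2).pow_pow _ _)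
  rw [map_powProd]
  simp only [hf]
  exact hcomm.eq.symm.trans (mul_assoc _ _ _).symm

end PowProd

section Involutions

variable {G : Type*} [Group G] {h : Fin 3 → G}

theorem powProd_mem_closure (h : Fin 3 → G) (e : Fin 3 → ℕ) :
    powProd h e ∈ Subgroup.closure (Set.range h) := by
  have hmem (i : Fin 3) : h i ∈ Subgroup.closure (Set.range h) :=
    Subgroup.subset_closure (Set.mem_range_self i)
  exact mul_mem (mul_mem (pow_mem (hmem 0) _) (pow_mem (hmem 1) _)) (pow_mem (hmem 2) _)

theorem smul_powProd_of_mem_closure {ι M : Type*} [Monoid M] [MulDistribMulAction G M] {s : ι → G}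
    {u : Fin 3 → M} (hu : ∀ i j, s i • u j = u j) {n : G}
    (hn : n ∈ Subgroup.closure (Set.range s)) (e : Fin 3 → ℕ) :
    n • powProd u e = powProd u e := by
  have hle : Subgroup.closure (Set.range s) ≤ MulAction.stabilizer G (powProd u e) := by
    rw [Subgroup.closure_le]
    rintro _ ⟨i, rfl⟩
    exact (map_powProd (MulDistribMulAction.toMonoidHom M (s i)) u e).trans
      (congrArg (powProd · e) (funext (hu i)))
  exact hle hn

theorem powProd_mul_powProd_of_sq_eq_one (hsq : ∀ i, h i ^ 2 = 1)
    (hcomm : ∀ i j, Commute (h i) (h j)) (a b : Fin 3 → Fin 2) :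
    powProd h (Fin.val ∘ a) * powProd h (Fin.val ∘ b) = powProd h (Fin.val ∘ (a + b)) := by
  rw [powProd_mul_powProd hcomm, funext hsq, powProd_one_left, one_mul]

theorem exists_powProd_eq_of_mem_closure (hsq : ∀ i, h i ^ 2 = 1)
    (hcomm : ∀ i j, Commute (h i) (h j)) {n : G} (hn : n ∈ Subgroup.closure (Set.range h)) :
    ∃ a : Fin 3 → Fin 2, powProd h (Fin.val ∘ a) = n := by
  induction hn using Subgroup.closure_induction with
  | mem n hn =>
    obtain ⟨i, rfl⟩ := hn
    refine ⟨Pi.single i 1, ?_⟩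
    fin_cases i <;> simp [powProd]
  | one => exact ⟨0, by simp [powProd]⟩
  | mul _ _ _ _ ihm ihn =>
    obtain ⟨a, rfl⟩ := ihm
    obtain ⟨b, rfl⟩ := ihn
    exact ⟨a + b, (powProd_mul_powProd_of_sq_eq_one hsq hcomm a b).symm⟩
  | inv _ _ ih =>
    obtain ⟨a, rfl⟩ := ih
    refine ⟨a, eq_inv_of_mul_eq_one_left ?_⟩
    have hadd : a + a = 0 := funext fun i => (by decide : ∀ s : Fin 2, s + s = 0) (a i)
    rw [powProd_mul_powProd_of_sq_eq_one hsq hcomm, hadd]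
    simp [powProd]

theorem conj_powProd_rotate (hcomm : ∀ i j, Commute (h i) (h j)) {g : G}
    (hg : ∀ i, SemiconjBy g (h i) (h (i + 1))) (e : Fin 3 → ℕ) :
    g⁻¹ * powProd h e * g = powProd h fun i => e (i + 1) := by
  have hrotate : g * (powProd h fun i => e (i + 1)) * g⁻¹ = powProd h e :=
    map_powProd_rotate (f := (MulAut.conj g).toMonoidHom) hcomm
      (fun i => mul_inv_eq_of_eq_mul (hg i)) e
  rw [← hrotate]
  group

end Involutions

section Coboundary

variable {G M : Type*}

/-- `lam` is the coboundary of the `1`-cochain `c`, that is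
`lam σ τ = σ • c τ * (c (σ * τ))⁻¹ * c σ`.  The inverse is moved to the left-hand side, so that the
notion makes sense for cochains with values in a monoid, such as a field. -/
def IsCoboundaryOf [Mul G] [Mul M] [SMul G M] (lam : G → G → M) (c : G → M) : Prop :=
  ∀ σ τ, lam σ τ * c (σ * τ) = σ • c τ * c σ

namespace IsCoboundaryOf

variable {lam : G → G → M} {c : G → M}

theorem cocycle_eq [Monoid G] [CommMonoidWithZero M] [IsCancelMulZero M] [MulDistribMulAction G M]
    (hlam : IsCoboundaryOf lam c) (hc : ∀ σ, c σ ≠ 0) (σ τ υ : G) :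
    σ • lam τ υ * lam σ (τ * υ) = lam (σ * τ) υ * lam σ τ := by
  refine mul_right_cancel₀ (hc (σ * τ * υ)) ?_
  calc σ • lam τ υ * lam σ (τ * υ) * c (σ * τ * υ)
      = σ • (lam τ υ * c (τ * υ)) * c σ := by
        rw [mul_assoc σ, mul_assoc, hlam, smul_mul', mul_assoc]
    _ = (σ * τ) • c υ * (σ • c τ * c σ) := by rw [hlam, smul_mul', mul_smul, mul_assoc]
    _ = lam (σ * τ) υ * c (σ * τ * υ) * lam σ τ := by
        rw [← hlam σ τ, hlam (σ * τ) υ, mul_comm (lam σ τ), mul_assoc]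
    _ = lam (σ * τ) υ * lam σ τ * c (σ * τ * υ) := mul_right_comm _ _ _

theorem ne_zero [Group G] [MonoidWithZero M] [NoZeroDivisors M] [MulDistribMulAction G M]
    (hlam : IsCoboundaryOf lam c) (hc : ∀ σ, c σ ≠ 0) (σ τ : G) : lam σ τ ≠ 0 := by
  have hσc : σ • c τ ≠ 0 :=
    (EmbeddingLike.map_ne_zero_iff (f := MulDistribMulAction.toMulEquiv M σ)).2 (hc τ)
  exact left_ne_zero_of_mul (hlam σ τ ▸ mul_ne_zero hσc (hc σ))

theorem eq_mul_inv_mul [Mul G] [CommGroupWithZero M] [SMul G M]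
    (hlam : IsCoboundaryOf lam c) (hc : ∀ σ, c σ ≠ 0) (σ τ : G) :
    lam σ τ = σ • c τ * (c (σ * τ))⁻¹ * c σ := by
  rw [mul_right_comm]
  exact (eq_mul_inv_iff_mul_eq₀ (hc _)).2 (hlam σ τ)

end IsCoboundaryOf

variable [Group G] {N : Subgroup G} {g : G} {c : G → M}

theorem conj_pow_mem_and_smul_eq [MulAction G M]
    (hg : ∀ n ∈ N, g⁻¹ * n * g ∈ N ∧ g • c (g⁻¹ * n * g) = c n) (l : ℕ) :
    ∀ n ∈ N, (g ^ l)⁻¹ * n * g ^ l ∈ N ∧ g ^ l • c ((g ^ l)⁻¹ * n * g ^ l) = c n := by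
  induction l with
  | zero => intro n hn; simpa using hn
  | succ l ih =>
    intro n hn
    obtain ⟨hmem, hsmul⟩ := ih n hn
    have hconj : (g ^ (l + 1))⁻¹ * n * g ^ (l + 1) = g⁻¹ * ((g ^ l)⁻¹ * n * g ^ l) * g := by
      rw [pow_succ]
      group
    rw [hconj, pow_succ, mul_smul, (hg _ hmem).2]
    exact ⟨(hg _ hmem).1, hsmul⟩

variable [CommMonoid M] [MulDistribMulAction G M]

theorem isCoboundaryOf_of_eq_pow_mul {lam : G → G → M}
    (hgen : ∀ σ, ∃ k : ℕ, ∃ n ∈ N, σ = g ^ k * n)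
    (hg : ∀ n ∈ N, g⁻¹ * n * g ∈ N ∧ g • c (g⁻¹ * n * g) = c n)
    (hfix : ∀ n ∈ N, ∀ n' ∈ N, n • c n' = c n')
    (hc : ∀ (k : ℕ), ∀ n ∈ N, c (g ^ k * n) = g ^ k • c n)
    (hlamN : ∀ n ∈ N, ∀ n' ∈ N, lam n n' * c (n * n') = c n * c n')
    (hlam : ∀ (k l : ℕ), ∀ n ∈ N, ∀ n' ∈ N,
      lam (g ^ k * n) (g ^ l * n') = g ^ (k + l) • lam ((g ^ l)⁻¹ * n * g ^ l) n') :
    IsCoboundaryOf lam c := by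
  intro σ τ
  obtain ⟨k, n, hn, rfl⟩ := hgen σ
  obtain ⟨l, n', hn', rfl⟩ := hgen τ
  obtain ⟨hm, hcm⟩ := conj_pow_mem_and_smul_eq hg l n hn
  have hlamστ := hlam k l n hn n' hn'
  have hmove : g ^ k * n * g ^ l = g ^ (k + l) * ((g ^ l)⁻¹ * n * g ^ l) := by
    rw [pow_add]
    group
  generalize (g ^ l)⁻¹ * n * g ^ l = m at hm hcm hlamστ hmove
  have hcστ : c (g ^ k * n * (g ^ l * n')) = g ^ (k + l) • c (m * n') := by
    rw [← mul_assoc, hmove, mul_assoc, hc _ _ (mul_mem hm hn')]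
  have hσc : (g ^ k * n) • c (g ^ l * n') = g ^ (k + l) • c n' := by
    rw [hc l n' hn', ← mul_smul, hmove, mul_smul, hfix m hm n' hn']
  have hcσ : c (g ^ k * n) = g ^ (k + l) • c m := by
    rw [hc k n hn, ← hcm, ← mul_smul, ← pow_add]
  rw [hlamστ, hcστ, hσc, hcσ, ← smul_mul', ← smul_mul', hlamN m hm n' hn', mul_comm]

theorem isCoboundaryOf_of_powProd {h : Fin 3 → G} {u : Fin 3 → M} {lam : G → G → M}
    (hsq : ∀ i, h i ^ 2 = 1) (hcomm : ∀ i j, Commute (h i) (h j))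
    (hgh : ∀ i, SemiconjBy g (h i) (h (i + 1)))
    (hgu : ∀ i, g • u i = u (i + 1)) (hhu : ∀ i j, h i • u j = u j)
    (hgen : ∀ σ, ∃ (k : ℕ) (a : Fin 3 → Fin 2), σ = g ^ k * powProd h (Fin.val ∘ a))
    (hc : ∀ (k : ℕ) (a : Fin 3 → Fin 2),
      c (g ^ k * powProd h (Fin.val ∘ a)) = g ^ k • powProd u (Fin.val ∘ a))
    (hlam₁ : ∀ a b : Fin 3 → Fin 2,
      lam (powProd h (Fin.val ∘ a)) (powProd h (Fin.val ∘ b)) =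
        powProd (fun i => u i ^ 2) (fun i => (a i : ℕ) * b i))
    (hlam₂ : ∀ (k l : ℕ), ∀ n ∈ Subgroup.closure (Set.range h),
      ∀ n' ∈ Subgroup.closure (Set.range h),
      lam (g ^ k * n) (g ^ l * n') = g ^ (k + l) • lam ((g ^ l)⁻¹ * n * g ^ l) n') :
    IsCoboundaryOf lam c := by
  have hform {n : G} (hn : n ∈ Subgroup.closure (Set.range h)) :=
    exists_powProd_eq_of_mem_closure hsq hcomm hn
  have hcu (a : Fin 3 → Fin 2) : c (powProd h (Fin.val ∘ a)) = powProd u (Fin.val ∘ a) := by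
    simpa only [pow_zero, one_mul, one_smul] using hc 0 a
  refine isCoboundaryOf_of_eq_pow_mul ?_ ?_ ?_ ?_ ?_ hlam₂
  · intro σ
    obtain ⟨k, a, rfl⟩ := hgen σ
    exact ⟨k, _, powProd_mem_closure h _, rfl⟩
  · intro n hn
    obtain ⟨a, rfl⟩ := hform hn
    have hconj : g⁻¹ * powProd h (Fin.val ∘ a) * g = powProd h (Fin.val ∘ fun i => a (i + 1)) :=
      conj_powProd_rotate hcomm hgh _
    rw [hconj, hcu, hcu]
    exact ⟨powProd_mem_closure h _, map_powProd_rotate (f := MulDistribMulAction.toMonoidHom M g)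
      (fun i j => Commute.all (u i) (u j)) hgu (Fin.val ∘ a)⟩
  · intro n hn n' hn'
    obtain ⟨a, rfl⟩ := hform hn'
    rw [hcu, smul_powProd_of_mem_closure hhu hn]
  · intro k n hn
    obtain ⟨a, rfl⟩ := hform hn
    rw [hc, hcu]
  · intro n hn n' hn'
    obtain ⟨a, rfl⟩ := hform hn
    obtain ⟨b, rfl⟩ := hform hn'
    rw [powProd_mul_powProd_of_sq_eq_one hsq hcomm, hlam₁, hcu, hcu, hcu,
      powProd_mul_powProd fun i j => Commute.all (u i) (u j)]

end Coboundary

section SignedPermutation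

/-- The elements `g` and `h i` of `G` act on the family `z` as generators of a wreath product with
`C₂`: `g` permutes the `z i` by `π`, each `h i` changes the sign of `z i` alone, and `z` is large
enough to tell the elements of `G` apart. -/
structure IsSignedPermutation {ι G A : Type*} [Group G] [AddGroup A] [DistribMulAction G A]
    (z : ι → A) (π : Equiv.Perm ι) (g : G) (h : ι → G) : Prop where
  injective : Function.Injective fun (σ : G) (i : ι) => σ • z i
  smul_perm : ∀ i, g • z i = z (π i)
  smul_self : ∀ i, h i • z i = -z i
  smul_of_ne : ∀ i j, i ≠ j → h i • z j = z j

namespace IsSignedPermutation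

variable {ι G : Type*} [Group G] {π : Equiv.Perm ι} {g : G} {h : ι → G}

section AddGroup

variable {A : Type*} [AddGroup A] [DistribMulAction G A] {z : ι → A}

theorem sq_eq_one (H : IsSignedPermutation z π g h) (i : ι) : h i ^ 2 = 1 := by
  refine H.injective (funext fun j => ?_)
  rcases eq_or_ne i j with rfl | hij
  · simp only [sq, mul_smul, H.smul_self, smul_neg, neg_neg, one_smul]
  · simp only [sq, mul_smul, H.smul_of_ne i j hij, one_smul]

theorem commute (H : IsSignedPermutation z π g h) (i j : ι) : Commute (h i) (h j) := by
  rcases eq_or_ne i j with rfl | hij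
  · exact Commute.refl _
  refine H.injective (funext fun l => ?_)
  rcases eq_or_ne i l with rfl | hil
  · simp only [mul_smul, H.smul_self, H.smul_of_ne j i hij.symm, smul_neg]
  rcases eq_or_ne j l with rfl | hjl
  · simp only [mul_smul, H.smul_self, H.smul_of_ne i j hij, smul_neg]
  · simp only [mul_smul, H.smul_of_ne i l hil, H.smul_of_ne j l hjl]

theorem semiconjBy (H : IsSignedPermutation z π g h) (i : ι) :
    SemiconjBy g (h i) (h (π i)) := by
  refine H.injective (funext fun j => ?_)
  rcases eq_or_ne i j with rfl | hij
  · simp only [mul_smul, H.smul_self, H.smul_perm, smul_neg]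
  · simp only [mul_smul, H.smul_of_ne i j hij, H.smul_perm,
      H.smul_of_ne _ _ (π.injective.ne hij)]

end AddGroup

theorem smul_sq {R : Type*} [Ring R] [MulSemiringAction G R] {z : ι → R}
    (H : IsSignedPermutation z π g h) (i j : ι) : h i • z j ^ 2 = z j ^ 2 := by
  rw [smul_pow']
  rcases eq_or_ne i j with rfl | hij
  · rw [H.smul_self, neg_sq]
  · rw [H.smul_of_ne i j hij]

end IsSignedPermutation

theorem isSignedPermutation_three {G A : Type*} [Group G] [AddGroup A] [DistribMulAction G A]
    {z₁ z₂ z₃ : A} {g h₁ h₂ h₃ : G}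
    (hinj : Function.Injective fun (σ : G) i => σ • ![z₁, z₂, z₃] i)
    (hg₁ : g • z₁ = z₂) (hg₂ : g • z₂ = z₃) (hg₃ : g • z₃ = z₁)
    (hh₁₁ : h₁ • z₁ = -z₁) (hh₁₂ : h₁ • z₂ = z₂) (hh₁₃ : h₁ • z₃ = z₃)
    (hh₂₁ : h₂ • z₁ = z₁) (hh₂₂ : h₂ • z₂ = -z₂) (hh₂₃ : h₂ • z₃ = z₃)
    (hh₃₁ : h₃ • z₁ = z₁) (hh₃₂ : h₃ • z₂ = z₂) (hh₃₃ : h₃ • z₃ = -z₃) :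
    IsSignedPermutation ![z₁, z₂, z₃] (Equiv.addRight 1) g ![h₁, h₂, h₃] where
  injective := hinj
  smul_perm i := by fin_cases i <;> assumption
  smul_self i := by fin_cases i <;> assumption
  smul_of_ne i j hij := by
    fin_cases i <;> fin_cases j <;> first | exact absurd rfl hij | assumption

theorem injective_smul_of_eq_adjoin {ι K L : Type*} [Field K] [Field L] [Algebra K L]
    {F : IntermediateField K L} {z : ι → F}
    (hF : F = IntermediateField.adjoin K (Set.range fun i => (z i : L))) :
    Function.Injective fun (σ : F ≃ₐ[K] F) (i : ι) => σ • z i := by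
  intro σ τ hστ
  have hhom : (σ : F →ₐ[K] F) = (τ : F →ₐ[K] F) := by
    apply IntermediateField.algHom_ext_of_eq_adjoin K hF
    rintro _ ⟨i, rfl⟩
    exact congrFun hστ i
  exact AlgEquiv.coe_toAlgHom_injective hhom

end SignedPermutation

section InvFourMul

variable {F : Type*} [Field F]

/-- The values `1 / (4 ρⱼ ρₖ)`, for `{i, j, k} = {0, 1, 2}`, of the cochain `c` at the involutions
`hᵢ`, spelled out with the indices in increasing order. -/
def invFourMul (ρ : Fin 3 → F) : Fin 3 → F :=
  ![1 / (4 * ρ 1 * ρ 2), 1 / (4 * ρ 0 * ρ 2), 1 / (4 * ρ 0 * ρ 1)]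

theorem map_invFourMul {F' : Type*} [Field F'] (f : F →+* F') (ρ : Fin 3 → F) (i : Fin 3) :
    f (invFourMul ρ i) = invFourMul (fun j => f (ρ j)) i := by
  fin_cases i <;> simp [invFourMul, map_ofNat f 4]

theorem invFourMul_rotate (ρ : Fin 3 → F) (i : Fin 3) :
    invFourMul (fun j => ρ (j + 1)) i = invFourMul ρ (i + 1) := by
  fin_cases i <;> simp [invFourMul] <;> ring

theorem invFourMul_ne_zero [NeZero (2 : F)] {ρ : Fin 3 → F} (hρ : ∀ i, ρ i ≠ 0) (i : Fin 3) :
    invFourMul ρ i ≠ 0 := by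
  have h4 : (4 : F) ≠ 0 := by
    rw [show (4 : F) = 2 ^ 2 by norm_num]
    exact pow_ne_zero 2 two_ne_zero
  fin_cases i <;> simp [invFourMul, hρ, h4]

theorem one_div_four_mul_mul_sq (x y : F) :
    (1 / (4 * x * y)) ^ 2 = -1 / (4 * x ^ 2) * (-1 / (4 * y ^ 2)) := by
  ring

namespace IsSignedPermutation

variable {G : Type*} [Group G] [MulSemiringAction G F] {g : G} {h : Fin 3 → G} {z : Fin 3 → F}

theorem ne_zero (H : IsSignedPermutation z (Equiv.addRight 1) g h) (hz : z 0 ≠ 0) (i : Fin 3) :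
    z i ≠ 0 := by
  have hstep (j : Fin 3) (hj : z j ≠ 0) : z (j + 1) ≠ 0 :=
    H.smul_perm j ▸ (smul_ne_zero_iff_ne g).2 hj
  fin_cases i
  exacts [hz, hstep 0 hz, hstep 1 (hstep 0 hz)]

theorem smul_invFourMul_sq_rotate (H : IsSignedPermutation z (Equiv.addRight 1) g h)
    (i : Fin 3) :
    g • invFourMul (fun j => z j ^ 2) i = invFourMul (fun j => z j ^ 2) (i + 1) := by
  have hg (j : Fin 3) : g • z j ^ 2 = z (j + 1) ^ 2 := by
    rw [smul_pow', H.smul_perm, Equiv.coe_addRight]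
  rw [← invFourMul_rotate, ← funext hg]
  exact map_invFourMul (MulSemiringAction.toRingHom G F g) _ i

theorem smul_invFourMul_sq {π : Equiv.Perm (Fin 3)} (H : IsSignedPermutation z π g h)
    (i j : Fin 3) :
    h i • invFourMul (fun l => z l ^ 2) j = invFourMul (fun l => z l ^ 2) j :=
  (map_invFourMul (MulSemiringAction.toRingHom G F (h i)) _ j).trans
    (congrArg (invFourMul · j) (funext (H.smul_sq i)))

theorem isCoboundary_and_isCocycle [NeZero (2 : F)]
    (H : IsSignedPermutation z (Equiv.addRight 1) g h) (hz : z 0 ≠ 0)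
    {lam : G → G → F} {c : G → F}
    (hgen : ∀ σ, ∃ (k : ℕ) (a : Fin 3 → Fin 2), σ = g ^ k * powProd h (Fin.val ∘ a))
    (hc : ∀ (k : ℕ) (a : Fin 3 → Fin 2), c (g ^ k * powProd h (Fin.val ∘ a)) =
      g ^ k • powProd (invFourMul fun i => z i ^ 2) (Fin.val ∘ a))
    (hlam₁ : ∀ a b : Fin 3 → Fin 2,
      lam (powProd h (Fin.val ∘ a)) (powProd h (Fin.val ∘ b)) =
        powProd (fun i => invFourMul (fun j => z j ^ 2) i ^ 2) (fun i => (a i : ℕ) * b i))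
    (hlam₂ : ∀ (k l : ℕ), ∀ n ∈ Subgroup.closure (Set.range h),
      ∀ n' ∈ Subgroup.closure (Set.range h),
      lam (g ^ k * n) (g ^ l * n') = g ^ (k + l) • lam ((g ^ l)⁻¹ * n * g ^ l) n') :
    (∀ σ τ, lam σ τ = σ • c τ * (c (σ * τ))⁻¹ * c σ) ∧
    (∀ σ τ υ, σ • lam τ υ * lam σ (τ * υ) = lam (σ * τ) υ * lam σ τ) ∧
    (∀ σ τ, lam σ τ ≠ 0) ∧ ∀ σ, c σ ≠ 0 := by
  have hc_ne (σ : G) : c σ ≠ 0 := by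
    obtain ⟨k, a, rfl⟩ := hgen σ
    rw [hc, smul_ne_zero_iff_ne]
    exact powProd_ne_zero (invFourMul_ne_zero fun i => pow_ne_zero 2 (H.ne_zero hz i)) _
  have hcob : IsCoboundaryOf lam c :=
    isCoboundaryOf_of_powProd H.sq_eq_one H.commute H.semiconjBy H.smul_invFourMul_sq_rotate
      H.smul_invFourMul_sq hgen hc hlam₁ hlam₂
  exact ⟨hcob.eq_mul_inv_mul hc_ne, hcob.cocycle_eq hc_ne, hcob.ne_zero hc_ne, hc_ne⟩

end IsSignedPermutation

end InvFourMul

theorem stmt18_general {K L : Type*} [Field K] [Field L] [Algebra K L] [NeZero (2 : K)]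
    {z₁ z₂ z₃ : L} (hz₁ : z₁ ≠ 0) {F : IntermediateField K L}
    (hF : F = IntermediateField.adjoin K {z₁, z₂, z₃}) (hm₁ : z₁ ∈ F) (hm₂ : z₂ ∈ F) (hm₃ : z₃ ∈ F)
    {ρ₁ ρ₂ ρ₃ : F} (hρ₁ : z₁ ^ 2 = (ρ₁ : L)) (hρ₂ : z₂ ^ 2 = (ρ₂ : L)) (hρ₃ : z₃ ^ 2 = (ρ₃ : L))
    {g h₁ h₂ h₃ : F ≃ₐ[K] F}
    (hg₁ : (g ⟨z₁, hm₁⟩ : L) = z₂) (hg₂ : (g ⟨z₂, hm₂⟩ : L) = z₃) (hg₃ : (g ⟨z₃, hm₃⟩ : L) = z₁)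
    (hh₁₁ : (h₁ ⟨z₁, hm₁⟩ : L) = -z₁) (hh₁₂ : (h₁ ⟨z₂, hm₂⟩ : L) = z₂)
    (hh₁₃ : (h₁ ⟨z₃, hm₃⟩ : L) = z₃) (hh₂₁ : (h₂ ⟨z₁, hm₁⟩ : L) = z₁)
    (hh₂₂ : (h₂ ⟨z₂, hm₂⟩ : L) = -z₂) (hh₂₃ : (h₂ ⟨z₃, hm₃⟩ : L) = z₃)
    (hh₃₁ : (h₃ ⟨z₁, hm₁⟩ : L) = z₁) (hh₃₂ : (h₃ ⟨z₂, hm₂⟩ : L) = z₂)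
    (hh₃₃ : (h₃ ⟨z₃, hm₃⟩ : L) = -z₃)
    (hnf : ∀ σ : F ≃ₐ[K] F, ∃ x : Fin 3 × Fin 2 × Fin 2 × Fin 2,
      σ = g ^ (x.1 : ℕ) * h₁ ^ (x.2.1 : ℕ) * h₂ ^ (x.2.2.1 : ℕ) * h₃ ^ (x.2.2.2 : ℕ))
    {c₁ c₂ c₃ : F} (hc₁ : c₁ = -1 / (4 * ρ₁ ^ 2)) (hc₂ : c₂ = -1 / (4 * ρ₂ ^ 2))
    (hc₃ : c₃ = -1 / (4 * ρ₃ ^ 2))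
    {lam : (F ≃ₐ[K] F) → (F ≃ₐ[K] F) → F}
    (hlam₁ : ∀ a₁ a₂ a₃ b₁ b₂ b₃ : Fin 2,
      lam (h₁ ^ (a₁ : ℕ) * h₂ ^ (a₂ : ℕ) * h₃ ^ (a₃ : ℕ))
          (h₁ ^ (b₁ : ℕ) * h₂ ^ (b₂ : ℕ) * h₃ ^ (b₃ : ℕ))
        = (c₂ * c₃) ^ ((a₁ : ℕ) * (b₁ : ℕ)) * (c₁ * c₃) ^ ((a₂ : ℕ) * (b₂ : ℕ))
            * (c₁ * c₂) ^ ((a₃ : ℕ) * (b₃ : ℕ)))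
    (hlam₂ : ∀ (k l : ℕ) (h h' : F ≃ₐ[K] F),
      h ∈ Subgroup.closure {h₁, h₂, h₃} → h' ∈ Subgroup.closure {h₁, h₂, h₃} →
      lam (g ^ k * h) (g ^ l * h') = (g ^ (k + l)) (lam ((g ^ l)⁻¹ * h * g ^ l) h'))
    {c : (F ≃ₐ[K] F) → F}
    (hc : ∀ (k : ℕ) (a₁ a₂ a₃ : Fin 2),
      c (g ^ k * h₁ ^ (a₁ : ℕ) * h₂ ^ (a₂ : ℕ) * h₃ ^ (a₃ : ℕ))
        = (g ^ k) ((1 / (4 * ρ₂ * ρ₃)) ^ (a₁ : ℕ) * (1 / (4 * ρ₁ * ρ₃)) ^ (a₂ : ℕ)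
            * (1 / (4 * ρ₁ * ρ₂)) ^ (a₃ : ℕ))) :
    (∀ σ τ : F ≃ₐ[K] F, lam σ τ = σ (c τ) * (c (σ * τ))⁻¹ * c σ) ∧
    (∀ σ τ υ : F ≃ₐ[K] F, σ (lam τ υ) * lam σ (τ * υ) = lam (σ * τ) υ * lam σ τ) ∧
    (∀ σ τ : F ≃ₐ[K] F, lam σ τ ≠ 0) ∧ (∀ σ : F ≃ₐ[K] F, c σ ≠ 0) := by
  obtain rfl : (⟨z₁, hm₁⟩ : F) ^ 2 = ρ₁ := Subtype.ext hρ₁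
  obtain rfl : (⟨z₂, hm₂⟩ : F) ^ 2 = ρ₂ := Subtype.ext hρ₂
  obtain rfl : (⟨z₃, hm₃⟩ : F) ^ 2 = ρ₃ := Subtype.ext hρ₃
  let z : Fin 3 → F := ![⟨z₁, hm₁⟩, ⟨z₂, hm₂⟩, ⟨z₃, hm₃⟩]
  let h : Fin 3 → F ≃ₐ[K] F := ![h₁, h₂, h₃]
  have hz : (Set.range fun i => (z i : L)) = {z₁, z₂, z₃} := by
    ext; simp [z, Fin.exists_fin_succ, eq_comm]
  have hh : Set.range h = {h₁, h₂, h₃} := by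
    simp only [h, Matrix.range_cons, Matrix.range_empty, Set.union_empty, Set.singleton_union]
  have H : IsSignedPermutation z (Equiv.addRight 1) g h :=
    isSignedPermutation_three (injective_smul_of_eq_adjoin (hz ▸ hF))
      (Subtype.ext hg₁) (Subtype.ext hg₂) (Subtype.ext hg₃)
      (Subtype.ext hh₁₁) (Subtype.ext hh₁₂) (Subtype.ext hh₁₃)
      (Subtype.ext hh₂₁) (Subtype.ext hh₂₂) (Subtype.ext hh₂₃)
      (Subtype.ext hh₃₁) (Subtype.ext hh₃₂) (Subtype.ext hh₃₃)
  have hgen (σ : F ≃ₐ[K] F) :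
      ∃ (k : ℕ) (a : Fin 3 → Fin 2), σ = g ^ k * powProd h (Fin.val ∘ a) := by
    obtain ⟨⟨k, a₁, a₂, a₃⟩, rfl⟩ := hnf σ
    exact ⟨k, ![a₁, a₂, a₃], by simp [powProd, h, mul_assoc]⟩
  have hc_powProd (k : ℕ) (a : Fin 3 → Fin 2) : c (g ^ k * powProd h (Fin.val ∘ a)) =
      g ^ k • powProd (invFourMul fun i => z i ^ 2) (Fin.val ∘ a) := by
    rw [powProd, ← mul_assoc, ← mul_assoc]
    exact hc k (a 0) (a 1) (a 2)
  have hsq : (fun i => invFourMul (fun j => z j ^ 2) i ^ 2) = ![c₂ * c₃, c₁ * c₃, c₁ * c₂] := by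
    subst hc₁ hc₂ hc₃
    funext i
    fin_cases i <;> exact one_div_four_mul_mul_sq _ _
  have : NeZero (2 : F) := NeZero.nat_of_injective (n := 2) (algebraMap K F).injective
  exact H.isCoboundary_and_isCocycle (fun h0 => hz₁ (congrArg Subtype.val h0)) hgen hc_powProd
    (fun a b => hsq ▸ hlam₁ (a 0) (a 1) (a 2) (b 0) (b 1) (b 2))
    (fun k l n hn n' hn' => hlam₂ k l n n' (hh ▸ hn) (hh ▸ hn'))

/-- The explicit `2`-cochain `λ` on `Gal(F/ℚ)` with values in `F^×`
(built from `c₁ = −1/(4ρ²)`, `c₂ = −1/(4ρ₂²)`, `c₃ = −1/(4ρ₃²)`) is the coboundary of the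
`1`-cochain `c` given by `c(g^k h₁^{a₁} h₂^{a₂} h₃^{a₃}) =
g^k((1/(4ρ₂ρ₃))^{a₁}(1/(4ρρ₃))^{a₂}(1/(4ρρ₂))^{a₃})`; in particular `λ` is a `2`-cocycle
representing the trivial class in `H²(Gal(F/ℚ), F^×)`. -/
theorem stmt18 (ρ ρ₂ ρ₃ : ℝ) (hρroot : ρ ^ 3 - 3 * ρ + 1 = 0) (hρneg : ρ < 0)
    (hρ₂ : ρ₂ = 1 / (1 - ρ)) (hρ₃ : ρ₃ = 1 - 1 / ρ)
    (z₁ z₂ z₃ : ℂ) (hz₁ : z₁ ^ 2 = (ρ : ℂ)) (hz₂ : z₂ ^ 2 = (ρ₂ : ℂ)) (hz₃ : z₃ ^ 2 = (ρ₃ : ℂ))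
    (F : IntermediateField ℚ ℂ) (hF : F = IntermediateField.adjoin ℚ {z₁, z₂, z₃})
    (hm₁ : z₁ ∈ F) (hm₂ : z₂ ∈ F) (hm₃ : z₃ ∈ F)
    -- `ρ, ρ₂, ρ₃` as elements of `F`
    (ρF ρ₂F ρ₃F : F) (hρF : (ρF : ℂ) = (ρ : ℂ)) (hρ₂F : (ρ₂F : ℂ) = (ρ₂ : ℂ))
    (hρ₃F : (ρ₃F : ℂ) = (ρ₃ : ℂ))
    -- the Galois automorphisms `g, h₁, h₂, h₃`
    (g h₁ h₂ h₃ : F ≃ₐ[ℚ] F)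
    (hg₁ : (g ⟨z₁, hm₁⟩ : ℂ) = z₂) (hg₂ : (g ⟨z₂, hm₂⟩ : ℂ) = z₃)
    (hg₃ : (g ⟨z₃, hm₃⟩ : ℂ) = z₁)
    (hh₁₁ : (h₁ ⟨z₁, hm₁⟩ : ℂ) = -z₁) (hh₁₂ : (h₁ ⟨z₂, hm₂⟩ : ℂ) = z₂)
    (hh₁₃ : (h₁ ⟨z₃, hm₃⟩ : ℂ) = z₃)
    (hh₂₁ : (h₂ ⟨z₁, hm₁⟩ : ℂ) = z₁) (hh₂₂ : (h₂ ⟨z₂, hm₂⟩ : ℂ) = -z₂)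
    (hh₂₃ : (h₂ ⟨z₃, hm₃⟩ : ℂ) = z₃)
    (hh₃₁ : (h₃ ⟨z₁, hm₁⟩ : ℂ) = z₁) (hh₃₂ : (h₃ ⟨z₂, hm₂⟩ : ℂ) = z₂)
    (hh₃₃ : (h₃ ⟨z₃, hm₃⟩ : ℂ) = -z₃)
    -- unique normal form `g^k h₁^{a₁} h₂^{a₂} h₃^{a₃}` with `k ∈ {0,1,2}`, `aᵢ ∈ {0,1}`
    (hnf : ∀ σ : F ≃ₐ[ℚ] F, ∃! x : Fin 3 × Fin 2 × Fin 2 × Fin 2,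
      σ = g ^ (x.1 : ℕ) * h₁ ^ (x.2.1 : ℕ) * h₂ ^ (x.2.2.1 : ℕ) * h₃ ^ (x.2.2.2 : ℕ))
    -- the constants `c₁, c₂, c₃`
    (c₁ c₂ c₃ : F) (hc₁ : c₁ = -1 / (4 * ρF ^ 2)) (hc₂ : c₂ = -1 / (4 * ρ₂F ^ 2))
    (hc₃ : c₃ = -1 / (4 * ρ₃F ^ 2))
    -- the `2`-cochain `λ`
    (lam : (F ≃ₐ[ℚ] F) → (F ≃ₐ[ℚ] F) → F)
    (hlam₁ : ∀ a₁ a₂ a₃ b₁ b₂ b₃ : Fin 2,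
      lam (h₁ ^ (a₁ : ℕ) * h₂ ^ (a₂ : ℕ) * h₃ ^ (a₃ : ℕ))
          (h₁ ^ (b₁ : ℕ) * h₂ ^ (b₂ : ℕ) * h₃ ^ (b₃ : ℕ))
        = (c₂ * c₃) ^ ((a₁ : ℕ) * (b₁ : ℕ)) * (c₁ * c₃) ^ ((a₂ : ℕ) * (b₂ : ℕ))
            * (c₁ * c₂) ^ ((a₃ : ℕ) * (b₃ : ℕ)))
    (hlam₂ : ∀ (k l : ℕ) (h h' : F ≃ₐ[ℚ] F),
      h ∈ Subgroup.closure {h₁, h₂, h₃} → h' ∈ Subgroup.closure {h₁, h₂, h₃} →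
      lam (g ^ k * h) (g ^ l * h')
        = (g ^ (k + l)) (lam ((g ^ l)⁻¹ * h * g ^ l) h'))
    -- the `1`-cochain `c`
    (c : (F ≃ₐ[ℚ] F) → F)
    (hc : ∀ (k : ℕ) (a₁ a₂ a₃ : Fin 2),
      c (g ^ k * h₁ ^ (a₁ : ℕ) * h₂ ^ (a₂ : ℕ) * h₃ ^ (a₃ : ℕ))
        = (g ^ k) ((1 / (4 * ρ₂F * ρ₃F)) ^ (a₁ : ℕ) * (1 / (4 * ρF * ρ₃F)) ^ (a₂ : ℕ)
            * (1 / (4 * ρF * ρ₂F)) ^ (a₃ : ℕ))) :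
    -- `λ` is the coboundary of `c` …
    (∀ σ τ : F ≃ₐ[ℚ] F, lam σ τ = σ (c τ) * (c (σ * τ))⁻¹ * c σ) ∧
    -- … and in particular a `2`-cocycle (trivial in `H²(Gal(F/ℚ), F^×)`)
    (∀ σ τ υ : F ≃ₐ[ℚ] F, σ (lam τ υ) * lam σ (τ * υ) = lam (σ * τ) υ * lam σ τ) ∧
    (∀ σ τ : F ≃ₐ[ℚ] F, lam σ τ ≠ 0) ∧ (∀ σ : F ≃ₐ[ℚ] F, c σ ≠ 0) := by
  have hz₁_ne : z₁ ≠ 0 := by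
    rintro rfl
    exact hρneg.ne (by simpa using hz₁.symm)
  exact stmt18_general hz₁_ne hF hm₁ hm₂ hm₃ (hz₁.trans hρF.symm) (hz₂.trans hρ₂F.symm)
    (hz₃.trans hρ₃F.symm) hg₁ hg₂ hg₃ hh₁₁ hh₁₂ hh₁₃ hh₂₁ hh₂₂ hh₂₃ hh₃₁ hh₃₂ hh₃₃
    (fun σ => (hnf σ).exists) hc₁ hc₂ hc₃ hlam₁ hlam₂ hc
end
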